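/- arXiv:0802.2342 — 2 statements merged into one kernel-verified Lean document; each statement's English description precedes it below -/
import Mathlib

section
/- Let n ≥ 3 and m ≥ 3 be integers, let A, B be the two endpoints of the deleted edge of K_m (i.e. a fixed pair of adjacent vertices of K_m), and let 1 ≤ k ≤ n' where n = 2n' if n is even and n = 2n'−1 if n is odd. Then the number of graph homomorphisms f : BW_n → K_m that map the hub into {A, B} and map exactly k edges of BW_n onto {A, B} equals 2·Σ' [Π_j (m−2)(m−3)^{i_j−i_{j−1}−2}] + 2·Σ'' (m−2)(m−3)^{i_1−2}·[Π_j (m−2)(m−3)^{i_j−i_{j−1}−2}] + 2·Σ''' [Π_j (m−2)(m−3)^{i_j−i_{j−1}−2}]·(m−2)(m−3)^{n−i_k−1} + 2·Σ'''' (m−2)^2·(m−3)^{i_1+n−i_k−3}·[Π_j (m−2)(m−3)^{i_j−i_{j−1}−2}], where every sum ranges over strictly increasing integer sequences i_1 < i_2 < ⋯ < i_k satisfying i_j − i_{j−1} > 1 for 2 ≤ j ≤ k; in Σ' the range is 1 = i_1 < ⋯ < i_k = n, in Σ'' it is 1 < i_1 < ⋯ < i_k = n, in Σ''' it is 1 =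 i_1 < ⋯ < i_k < n, in Σ'''' it is 1 < i_1 < ⋯ < i_k < n; and each product Π_j runs over the indices 2 ≤ j ≤ k (an empty product equals 1). Moreover, for n' < k ≤ n there are no such homomorphisms. -/
/-- For a sequence `c = (i_1, …, i_k)` (indexed by `Fin k`), `gapAt c j = i_j - i_{j-1}`,
the difference of the `j`-th entry and the previous one (junk at `j = 0`). -/
def gapAt {k n : ℕ} (c : Fin k → Fin n) (j : Fin k) : ℕ :=
  (c j).val - (c ⟨j.val - 1, lt_of_le_of_lt (Nat.sub_le _ _) j.isLt⟩).val

/-- A strictly increasing sequence `i_1 < i_2 < ⋯ < i_k` with `i_j - i_{j-1} > 1`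
for `2 ≤ j ≤ k`. -/
abbrev SeqOKGt1 {k n : ℕ} (c : Fin k → Fin n) : Prop :=
  (∀ a b : Fin k, a < b → c a < c b) ∧ ∀ j : Fin k, j.val ≠ 0 → 1 < gapAt c j

/-- The product `Π_j (m-2)·(m-3)^{i_j - i_{j-1} - 2}` over the indices `2 ≤ j ≤ k`
(an empty product equals `1`). -/
def hubGapProd (m : ℕ) {k n : ℕ} (c : Fin k → Fin n) : ℕ :=
  ∏ j : Fin k,
    if j.val = 0 then 1 else (m - 2) * (m - 3) ^ (gapAt c j - 2)

/-- The broken wheel `BW_n` on `n` spokes: vertex `0` is the hub, adjacent to all of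
`1, …, n`; the path part has edges `i(i+1)` for `1 ≤ i ≤ n-1`. -/
def brokenWheel (n : ℕ) : SimpleGraph (Fin (n + 1)) :=
  SimpleGraph.fromRel (fun a b => a.val = 0 ∨ (a.val ≠ 0 ∧ a.val + 1 = b.val))

/-- The number of edges of the broken wheel `BW_n` (spokes `0i` and path edges `i(i+1)`)
that `f` maps onto the pair `{A, B}`. -/
def bwEdgeCount (n m : ℕ) (A B : Fin m) (f : Fin (n + 1) → Fin m) : ℕ :=
  (Finset.univ.filter (fun i : Fin (n + 1) =>
      i.val ≠ 0 ∧ ({f ⟨0, Nat.succ_pos n⟩, f i} : Finset (Fin m)) = {A, B})).card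
  + (Finset.univ.filter (fun i : Fin n =>
      i.val ≠ 0 ∧ ({f ⟨i.val, Nat.lt_succ_of_lt i.isLt⟩,
                    f ⟨i.val + 1, Nat.succ_lt_succ i.isLt⟩} : Finset (Fin m)) = {A, B})).card

/-- The number of colours available at vertex `i + 1` of the path of a broken wheel, given a proper
colouring of the earlier vertices, when `S` is the set of path vertices that receive the colour of
the special pair not used by the hub. -/
def stepWeight (m : ℕ) (S : Finset ℕ) (i : ℕ) : ℕ :=
  if i + 1 ∈ S then (if i ∈ S then 0 else 1) else if i = 0 ∨ i ∈ S then m - 2 else m - 3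

/-- The hub gets colour `h`, the colouring `f` of `BW_n` is proper, and `S` describes the path
vertices of colour `o`. -/
def IsPatternColoring {m : ℕ} (h o : Fin m) (S : Finset ℕ) (n : ℕ) (f : Fin (n + 1) → Fin m) :
    Prop :=
  f 0 = h ∧ (∀ i : Fin n, f i.succ ≠ h) ∧ (∀ i : Fin n, f i.castSucc ≠ f i.succ) ∧
    ∀ i : Fin n, f i.succ = o ↔ i.val + 1 ∈ S

theorem isPatternColoring_snoc {m : ℕ} (h o : Fin m) (S : Finset ℕ) (n : ℕ)
    (f : Fin (n + 1) → Fin m) (x : Fin m) :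
    IsPatternColoring h o S (n + 1) (Fin.snoc (α := fun _ => Fin m) f x) ↔
      IsPatternColoring h o S n f ∧ x ≠ h ∧ f (Fin.last n) ≠ x ∧ (x = o ↔ n + 1 ∈ S) := by
  have h0 : (Fin.snoc (α := fun _ => Fin m) f x : Fin (n + 2) → Fin m) 0 = f 0 :=
    Fin.snoc_castSucc (α := fun _ => Fin m) x f 0
  have hc : ∀ i : Fin (n + 1),
      (Fin.snoc (α := fun _ => Fin m) f x : Fin (n + 2) → Fin m) i.castSucc = f i :=
    fun i => Fin.snoc_castSucc (α := fun _ => Fin m) x f i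
  have hl : (Fin.snoc (α := fun _ => Fin m) f x : Fin (n + 2) → Fin m) (Fin.last (n + 1)) = x :=
    Fin.snoc_last (α := fun _ => Fin m) x f
  simp only [IsPatternColoring, Fin.forall_fin_succ', h0, hc, hl, Fin.succ_last,
    Fin.succ_castSucc, Fin.val_castSucc, Fin.val_last]
  tauto

theorem card_extension {m : ℕ} {h o : Fin m} (hho : h ≠ o) {S : Finset ℕ} (hS : 0 ∉ S) {n : ℕ}
    {f : Fin (n + 1) → Fin m} (hf : IsPatternColoring h o S n f) :
    (Finset.univ.filter fun x : Fin m =>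
      x ≠ h ∧ f (Fin.last n) ≠ x ∧ (x = o ↔ n + 1 ∈ S)).card = stepWeight m S n := by
  obtain ⟨h0, h1, -, h3⟩ := hf
  have key : (n = 0 ∧ f (Fin.last n) = h) ∨
      (n ≠ 0 ∧ f (Fin.last n) ≠ h ∧ (f (Fin.last n) = o ↔ n ∈ S)) := by
    rcases n with _ | n
    · exact Or.inl ⟨rfl, h0⟩
    · refine Or.inr ⟨by omega, ?_, ?_⟩
      · simpa using h1 (Fin.last n)
      · simpa using h3 (Fin.last n)
  generalize f (Fin.last n) = y at key
  unfold stepWeight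
  by_cases hn : n + 1 ∈ S
  · rw [if_pos hn]
    by_cases hn' : n ∈ S
    · rw [if_pos hn', Finset.card_eq_zero, Finset.filter_eq_empty_iff]
      rintro x -
      have : n ≠ 0 := by rintro rfl; exact hS hn'
      simp only [hn, iff_true]
      rintro ⟨-, hy, hx⟩
      exact hy (by rw [hx]; tauto)
    · rw [if_neg hn', Finset.card_eq_one]
      refine ⟨o, ?_⟩
      ext x
      simp only [Finset.mem_filter, Finset.mem_univ, true_and, hn, iff_true,
        Finset.mem_singleton]
      constructor
      · tauto
      · rintro rfl
        refine ⟨hho.symm, ?_, rfl⟩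
        rcases key with ⟨-, rfl⟩ | ⟨-, -, hy⟩
        · exact hho
        · tauto
  · rw [if_neg hn]
    have hset : (Finset.univ.filter fun x : Fin m => x ≠ h ∧ y ≠ x ∧ (x = o ↔ n + 1 ∈ S)) =
        ({h, o, y} : Finset (Fin m))ᶜ := by
      ext x
      simp only [Finset.mem_filter, Finset.mem_univ, true_and, hn, iff_false, Finset.mem_compl,
        Finset.mem_insert, Finset.mem_singleton]
      grind
    rw [hset, Finset.card_compl, Fintype.card_fin]
    split_ifs with hc
    · have : ({h, o, y} : Finset (Fin m)) = {h, o} := by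
        ext x
        simp only [Finset.mem_insert, Finset.mem_singleton]
        grind
      rw [this, Finset.card_pair hho]
    · rw [Finset.card_eq_three.mpr ⟨h, o, y, hho, by grind, by grind, rfl⟩]

open Classical in
theorem card_patternColoring {m : ℕ} {h o : Fin m} (hho : h ≠ o) {S : Finset ℕ} (hS : 0 ∉ S)
    (n : ℕ) :
    (Finset.univ.filter (IsPatternColoring h o S n)).card =
      ∏ i ∈ Finset.range n, stepWeight m S i := by
  induction n with
  | zero =>
    rw [Finset.prod_range_zero, Finset.card_eq_one]
    refine ⟨fun _ => h, ?_⟩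
    ext f
    simp only [IsPatternColoring, Finset.mem_filter, Finset.mem_univ, true_and,
      IsEmpty.forall_iff, and_true, Finset.mem_singleton, funext_iff]
    exact (Fin.forall_fin_one (p := fun x => f x = h)).symm
  | succ n ih =>
    rw [Finset.prod_range_succ, ← ih, ← smul_eq_mul, ← Finset.sum_const]
    rw [← Finset.sum_congr rfl fun f hf => card_extension hho hS (Finset.mem_filter.mp hf).2,
      ← Finset.card_sigma]
    refine (Finset.card_nbij' (fun p => Fin.snoc (α := fun _ => Fin m) p.1 p.2)
      (fun g => ⟨Fin.init g, g (Fin.last (n + 1))⟩) ?_ ?_ ?_ ?_).symm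
    · rintro ⟨f, x⟩ hp
      simpa [isPatternColoring_snoc] using hp
    · intro g hg
      have := isPatternColoring_snoc h o S n (Fin.init g) (g (Fin.last (n + 1)))
      rw [Fin.snoc_init_self] at this
      simpa [this] using hg
    · rintro ⟨f, x⟩ -
      simp
    · intro g _
      simp

theorem prod_stepWeight_gap (m : ℕ) {S : Finset ℕ} {a b : ℕ} (hab : a < b)
    (ha : a = 0 ∨ a ∈ S) (hS : ∀ i, a < i → i < b → i ∉ S) :
    ∏ i ∈ Finset.Ico a (b - 1), stepWeight m S i =
      if b = a + 1 then 1 else (m - 2) * (m - 3) ^ (b - a - 2) := by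
  split_ifs with h
  · simp [h]
  · rw [Finset.prod_eq_prod_Ico_succ_bot (by omega)]
    congr 1
    · unfold stepWeight
      rw [if_neg (hS _ (by omega) (by omega)), if_pos ha]
    · rw [Finset.prod_congr rfl (g := fun _ => m - 3), Finset.prod_const, Nat.card_Ico]
      · congr 1; omega
      · intro i hi
        rw [Finset.mem_Ico] at hi
        have := hS i (by omega) (by omega)
        unfold stepWeight
        rw [if_neg (hS _ (by omega) (by omega)), if_neg]
        rintro (h | h)
        · omega
        · contradiction

theorem prod_stepWeight_gap_mem (m : ℕ) {S : Finset ℕ} {a b : ℕ} (hab : a < b)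
    (ha : a = 0 ∨ a ∈ S) (hS : ∀ i, a < i → i < b → i ∉ S) (hb : b ∈ S) (hb' : b - 1 ∉ S) :
    ∏ i ∈ Finset.Ico a b, stepWeight m S i =
      if b = a + 1 then 1 else (m - 2) * (m - 3) ^ (b - a - 2) := by
  rw [← prod_stepWeight_gap m hab ha hS]
  obtain ⟨b, rfl⟩ : ∃ b', b = b' + 1 := ⟨b - 1, by omega⟩
  rw [Nat.add_sub_cancel] at hb' ⊢
  rw [Finset.prod_Ico_succ_top (by omega)]
  simp [stepWeight, hb, hb']

theorem prod_range_stepWeight_of_sparse (m : ℕ) {S : Finset ℕ} {d : ℕ → ℕ} {l : ℕ}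
    (hS : ∀ i, i ∈ S ↔ ∃ t ≤ l, d t = i) (hd : ∀ a b, a < b → b ≤ l → d a < d b)
    (hgap : ∀ t < l, 1 < d (t + 1) - d t) (h1 : 1 ≤ d 0) {t : ℕ} (ht : t ≤ l) :
    ∏ i ∈ Finset.range (d t), stepWeight m S i =
      (if d 0 = 1 then 1 else (m - 2) * (m - 3) ^ (d 0 - 2)) *
        ∏ j ∈ Finset.range t, (m - 2) * (m - 3) ^ (d (j + 1) - d j - 2) := by
  have hle : ∀ a b, a ≤ b → b ≤ l → d a ≤ d b := fun a b hab hb =>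
    hab.eq_or_lt.elim (fun h => h ▸ le_rfl) fun h => (hd a b h hb).le
  induction t with
  | zero =>
    have hlow : ∀ i < d 0, i ∉ S := by
      intro i hi hiS
      obtain ⟨t, ht, rfl⟩ := (hS i).1 hiS
      exact absurd (hle 0 t (Nat.zero_le _) ht) (by omega)
    rw [Finset.range_eq_Ico, prod_stepWeight_gap_mem m h1 (Or.inl rfl) (fun i _ => hlow i)
      ((hS _).2 ⟨0, ht, rfl⟩) (hlow _ (by omega))]
    simp
  | succ t ih =>
    have hg := hgap t (by omega)
    have hmid : ∀ i, d t < i → i < d (t + 1) → i ∉ S := by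
      intro i hi hi' hiS
      obtain ⟨s, hs, rfl⟩ := (hS i).1 hiS
      rcases Nat.lt_or_ge t s with h | h
      · exact absurd (hle (t + 1) s h hs) (by omega)
      · exact absurd (hle s t h (by omega)) (by omega)
    rw [Finset.prod_range_succ, ← mul_assoc, ← ih (by omega),
      ← Finset.prod_range_mul_prod_Ico _ (show d t ≤ d (t + 1) by omega),
      prod_stepWeight_gap_mem m (by omega) (Or.inr ((hS _).2 ⟨t, by omega, rfl⟩)) hmid
        ((hS _).2 ⟨t + 1, ht, rfl⟩) (hmid _ (by omega) (by omega)),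
      if_neg (by omega)]

/-- The set of values of a sequence in `Fin (n + 1)`. -/
def valueSet {k n : ℕ} (c : Fin k → Fin (n + 1)) : Finset ℕ :=
  Finset.univ.image fun j => (c j).val

theorem prod_stepWeight_valueSet (m : ℕ) {l n : ℕ} (c : Fin (l + 1) → Fin (n + 1))
    (hc : SeqOKGt1 c) (h1 : 1 ≤ (c 0).val) :
    ∏ i ∈ Finset.range n, stepWeight m (valueSet c) i =
      (if (c 0).val = 1 then 1 else (m - 2) * (m - 3) ^ ((c 0).val - 2)) * hubGapProd m c *
        (if (c (Fin.last l)).val = n then 1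
          else (m - 2) * (m - 3) ^ (n - (c (Fin.last l)).val - 1)) := by
  set d : ℕ → ℕ := fun t => (c (Fin.ofNat (l + 1) t)).val with hd
  have hof : ∀ t (ht : t < l + 1), Fin.ofNat (l + 1) t = ⟨t, ht⟩ := fun t ht =>
    Fin.ext (Nat.mod_eq_of_lt ht)
  have hdt : ∀ t (ht : t < l + 1), d t = (c ⟨t, ht⟩).val := fun t ht => by
    simp only [hd, hof t ht]
  have hS : ∀ i, i ∈ valueSet c ↔ ∃ t ≤ l, d t = i := by
    intro i
    simp only [valueSet, Finset.mem_image, Finset.mem_univ, true_and]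
    constructor
    · rintro ⟨j, rfl⟩
      exact ⟨j.val, by omega, hdt _ j.isLt⟩
    · rintro ⟨t, ht, rfl⟩
      exact ⟨_, rfl⟩
  have hmono : ∀ a b, a < b → b ≤ l → d a < d b := by
    intro a b hab hb
    rw [hdt a (by omega), hdt b (by omega)]
    exact hc.1 _ _ hab
  have hgapAt : ∀ t (ht : t < l), gapAt c ⟨t + 1, by omega⟩ = d (t + 1) - d t := by
    intro t ht
    rw [hdt t (by omega), hdt (t + 1) (by omega)]
    rfl
  have hgap : ∀ t < l, 1 < d (t + 1) - d t := by
    intro t ht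
    rw [← hgapAt t ht]
    exact hc.2 _ (Nat.succ_ne_zero t)
  have hprod : hubGapProd m c =
      ∏ j ∈ Finset.range l, (m - 2) * (m - 3) ^ (d (j + 1) - d j - 2) := by
    rw [hubGapProd, Fin.prod_univ_succ, ← Fin.prod_univ_eq_prod_range
      (fun j => (m - 2) * (m - 3) ^ (d (j + 1) - d j - 2))]
    simp only [Fin.val_zero, if_true, one_mul, Fin.val_succ, Nat.succ_ne_zero, if_false]
    refine Finset.prod_congr rfl fun j _ => ?_
    rw [← hgapAt j.val j.isLt]
    rfl
  have h0 : (c 0).val = d 0 := (hdt 0 (by omega)).symm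
  have hl : (c (Fin.last l)).val = d l := (hdt l (by omega)).symm
  have hln : d l ≤ n := by have := (c (Fin.last l)).isLt; omega
  rw [h0, hl, hprod, ← prod_range_stepWeight_of_sparse m hS hmono hgap (h0 ▸ h1) le_rfl,
    ← Finset.prod_range_mul_prod_Ico _ hln]
  congr 1
  have := prod_stepWeight_gap m (S := valueSet c) (a := d l) (b := n + 1) (by omega)
    (Or.inr ((hS _).2 ⟨l, le_rfl, rfl⟩)) (by
      intro i hi _ hiS
      obtain ⟨s, hs, rfl⟩ := (hS i).1 hiS
      rcases hs.eq_or_lt with rfl | h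
      · omega
      · exact absurd (hmono s l h le_rfl) (by omega))
  rw [Nat.add_sub_cancel] at this
  rw [this]
  refine if_congr (by omega) rfl ?_
  congr 2
  omega

theorem prod_stepWeight_valueSet_eq_zero (m : ℕ) {k n : ℕ} (c : Fin k → Fin (n + 1))
    (hmono : ∀ a b : Fin k, a < b → c a < c b) (hc : ¬ SeqOKGt1 c) :
    ∏ i ∈ Finset.range n, stepWeight m (valueSet c) i = 0 := by
  have : ∃ j : Fin k, j.val ≠ 0 ∧ ¬ 1 < gapAt c j := by
    by_contra! h
    exact hc ⟨hmono, h⟩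
  obtain ⟨j, hj, hg⟩ := this
  set j' : Fin k := ⟨j.val - 1, lt_of_le_of_lt (Nat.sub_le _ _) j.isLt⟩ with hj'
  have hlt : (c j').val < (c j).val := hmono j' j (by rw [Fin.lt_def]; simp only [hj']; omega)
  have hg' : ¬ 1 < (c j).val - (c j').val := hg
  have hmem : ∀ i, (c i).val ∈ valueSet c := fun i =>
    Finset.mem_image.2 ⟨i, Finset.mem_univ _, rfl⟩
  refine Finset.prod_eq_zero (i := (c j').val) (Finset.mem_range.2 (by omega)) ?_
  have h1 : (c j').val + 1 = (c j).val := by omega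
  simp [stepWeight, h1, hmem]

theorem sum_powersetCard_eq_sum_strictMono {l n : ℕ} (F : Finset ℕ → ℕ) :
    ∑ S ∈ Finset.powersetCard (l + 1) (Finset.Icc 1 n), F S =
      ∑ c ∈ Finset.univ.filter (fun c : Fin (l + 1) → Fin (n + 1) =>
        (∀ a b, a < b → c a < c b) ∧ 1 ≤ (c 0).val), F (valueSet c) := by
  symm
  refine Finset.sum_bij (fun c _ => valueSet c) ?_ ?_ ?_ ?_
  · intro c hc
    obtain ⟨hmono, h1⟩ := (Finset.mem_filter.1 hc).2
    have hm : StrictMono c := fun a b => hmono a b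
    rw [Finset.mem_powersetCard]
    constructor
    · intro i hi
      obtain ⟨j, -, rfl⟩ := Finset.mem_image.1 hi
      have : (c 0).val ≤ (c j).val := hm.monotone (Fin.zero_le j)
      rw [Finset.mem_Icc]
      omega
    · rw [valueSet, Finset.card_image_of_injective, Finset.card_univ, Fintype.card_fin]
      exact Fin.val_injective.comp hm.injective
  · intro c hc c' hc' h
    have hm : StrictMono (fun j => (c j).val) := fun a b => (Finset.mem_filter.1 hc).2.1 a b
    have hm' : StrictMono (fun j => (c' j).val) := fun a b => (Finset.mem_filter.1 hc').2.1 a b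
    have hr : Set.range (fun j => (c j).val) = Set.range (fun j => (c' j).val) := by
      have := congrArg (fun s : Finset ℕ => (s : Set ℕ)) h
      simpa [valueSet] using this
    have := (StrictMono.range_inj hm hm').1 hr
    funext j
    exact Fin.ext (congrFun this j)
  · intro S hS
    obtain ⟨hsub, hcard⟩ := Finset.mem_powersetCard.1 hS
    have hb : ∀ j, 1 ≤ S.orderEmbOfFin hcard j ∧ S.orderEmbOfFin hcard j ≤ n := fun j =>
      Finset.mem_Icc.1 (hsub (Finset.orderEmbOfFin_mem S hcard j))
    refine ⟨fun j => ⟨S.orderEmbOfFin hcard j, Nat.lt_succ_of_le (hb j).2⟩, ?_, ?_⟩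
    · rw [Finset.mem_filter]
      refine ⟨Finset.mem_univ _, fun a b hab => ?_, (hb 0).1⟩
      exact (S.orderEmbOfFin hcard).strictMono hab
    · simp [valueSet]
  · intro c _
    rfl

/-- The path vertices of `BW_n` of colour `o`. -/
def colorSet {m n : ℕ} (o : Fin m) (f : Fin (n + 1) → Fin m) : Finset ℕ :=
  (Finset.univ.filter fun i : Fin n => f i.succ = o).image fun i => i.val + 1

theorem succ_mem_colorSet {m n : ℕ} (o : Fin m) (f : Fin (n + 1) → Fin m) (i : Fin n) :
    i.val + 1 ∈ colorSet o f ↔ f i.succ = o := by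
  simp only [colorSet, Finset.mem_image, Finset.mem_filter, Finset.mem_univ, true_and]
  constructor
  · rintro ⟨j, hj, h⟩
    rwa [← Fin.ext (Nat.succ_injective h)]
  · exact fun h => ⟨i, h, rfl⟩

theorem colorSet_subset {m n : ℕ} (o : Fin m) (f : Fin (n + 1) → Fin m) :
    colorSet o f ⊆ Finset.Icc 1 n := by
  intro i hi
  obtain ⟨j, -, rfl⟩ := Finset.mem_image.1 hi
  rw [Finset.mem_Icc]
  omega

theorem colorSet_eq_iff {m n : ℕ} (o : Fin m) (f : Fin (n + 1) → Fin m) {S : Finset ℕ}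
    (hS : S ⊆ Finset.Icc 1 n) :
    colorSet o f = S ↔ ∀ i : Fin n, f i.succ = o ↔ i.val + 1 ∈ S := by
  constructor
  · rintro rfl i
    exact (succ_mem_colorSet o f i).symm
  · intro h
    ext x
    by_cases hx : x ∈ Finset.Icc 1 n
    · obtain ⟨h1, h2⟩ := Finset.mem_Icc.1 hx
      obtain ⟨x, rfl⟩ : ∃ y, x = y + 1 := ⟨x - 1, by omega⟩
      rw [succ_mem_colorSet o f ⟨x, by omega⟩]
      exact h ⟨x, by omega⟩
    · exact iff_of_false (fun h => hx (colorSet_subset o f h)) fun h => hx (hS h)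

/-- `f` is a proper colouring of `BW_n` in which the hub has colour `h`. -/
def IsHubColoring {m : ℕ} (h : Fin m) (n : ℕ) (f : Fin (n + 1) → Fin m) : Prop :=
  f 0 = h ∧ (∀ i : Fin n, f i.succ ≠ h) ∧ ∀ i : Fin n, f i.castSucc ≠ f i.succ

open Classical in
theorem card_hubColoring {m n : ℕ} {h o : Fin m} (hho : h ≠ o) (k : ℕ) :
    (Finset.univ.filter fun f : Fin (n + 1) → Fin m =>
      IsHubColoring h n f ∧ (colorSet o f).card = k).card =
      ∑ S ∈ Finset.powersetCard k (Finset.Icc 1 n),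
        ∏ i ∈ Finset.range n, stepWeight m S i := by
  rw [Finset.card_eq_sum_card_fiberwise (f := colorSet o)
    (t := Finset.powersetCard k (Finset.Icc 1 n))]
  · refine Finset.sum_congr rfl fun S hS => ?_
    obtain ⟨hsub, hcard⟩ := Finset.mem_powersetCard.1 hS
    rw [← card_patternColoring hho (fun h0 => by simpa using hsub h0)]
    congr 1
    ext f
    simp only [Finset.mem_filter, Finset.mem_univ, true_and]
    simp only [IsHubColoring, IsPatternColoring, ← colorSet_eq_iff o f hsub]
    constructor
    · tauto
    · rintro ⟨h0, h1, h2, rfl⟩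
      tauto
  · intro f hf
    rw [Finset.mem_coe, Finset.mem_powersetCard]
    exact ⟨colorSet_subset o f, (Finset.mem_filter.1 hf).2.2⟩

theorem two_mul_card_colorSet_le {m n : ℕ} {o : Fin m} {f : Fin (n + 1) → Fin m}
    (hf : ∀ i : Fin n, f i.castSucc ≠ f i.succ) : 2 * (colorSet o f).card ≤ n + 1 := by
  have hdisj : Disjoint (colorSet o f) ((colorSet o f).image (· + 1)) := by
    rw [Finset.disjoint_left]
    intro x hx hx'
    obtain ⟨y, hy, rfl⟩ := Finset.mem_image.1 hx'
    obtain ⟨j, hj, rfl⟩ := Finset.mem_image.1 hy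
    obtain ⟨i, hi, hij⟩ := Finset.mem_image.1 hx
    have h1 := (Finset.mem_filter.1 hi).2
    have h2 := (Finset.mem_filter.1 hj).2
    have h3 : i.castSucc = j.succ := Fin.ext (by simpa using hij)
    exact hf i (by rw [h1, h3, h2])
  have hsub : colorSet o f ∪ (colorSet o f).image (· + 1) ⊆ Finset.Icc 1 (n + 1) := by
    intro x hx
    rw [Finset.mem_Icc]
    rcases Finset.mem_union.1 hx with h | h
    · have := Finset.mem_Icc.1 (colorSet_subset o f h)
      omega
    · obtain ⟨y, hy, rfl⟩ := Finset.mem_image.1 h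
      have := Finset.mem_Icc.1 (colorSet_subset o f hy)
      omega
  have := Finset.card_le_card hsub
  rw [Finset.card_union_of_disjoint hdisj,
    Finset.card_image_of_injective _ (add_left_injective 1), Nat.card_Icc] at this
  omega

theorem bwEdgeCount_of_isHubColoring {m n : ℕ} {A B h o : Fin m} (hho : h ≠ o)
    (hp : ({h, o} : Finset (Fin m)) = {A, B}) {f : Fin (n + 1) → Fin m}
    (hf : IsHubColoring h n f) : bwEdgeCount n m A B f = (colorSet o f).card := by
  obtain ⟨h0, h1, -⟩ := hf
  have h0' : f ⟨0, Nat.succ_pos n⟩ = h := h0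
  have hpair : ∀ x : Fin m, ({h, x} : Finset (Fin m)) = {h, o} ↔ x = o := by
    refine fun x => ⟨fun he => ?_, fun he => by rw [he]⟩
    have : o ∈ ({h, x} : Finset (Fin m)) := by simp [he]
    simpa [hho.symm, eq_comm] using this
  have hne : ∀ x y : Fin m, x ≠ h → y ≠ h → ({x, y} : Finset (Fin m)) ≠ {h, o} := by
    intro x y hx hy he
    have : h ∈ ({x, y} : Finset (Fin m)) := by simp [he]
    simp [hx.symm, hy.symm] at this
  unfold bwEdgeCount
  rw [← hp]
  have hz : (Finset.univ.filter (fun i : Fin n =>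
      i.val ≠ 0 ∧ ({f ⟨i.val, Nat.lt_succ_of_lt i.isLt⟩,
        f ⟨i.val + 1, Nat.succ_lt_succ i.isLt⟩} : Finset (Fin m)) = {h, o})) = ∅ := by
    rw [Finset.filter_eq_empty_iff]
    rintro i - ⟨hi, he⟩
    refine hne _ _ ?_ (h1 i) he
    have := h1 ⟨i.val - 1, by omega⟩
    convert this using 3
    simp only [Fin.succ_mk]
    omega
  rw [hz, Finset.card_empty, add_zero, colorSet, Finset.card_image_of_injective]
  · rw [← Finset.card_map (Fin.succEmb n)]
    congr 1
    ext i
    simp only [h0', hpair, Finset.mem_filter, Finset.mem_univ, true_and, Finset.mem_map]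
    constructor
    · rintro ⟨hi, hfi⟩
      obtain ⟨j, rfl⟩ := Fin.exists_succ_eq.2 (fun h => hi (by rw [h]; rfl) : i ≠ 0)
      exact ⟨j, hfi, rfl⟩
    · rintro ⟨j, hj, rfl⟩
      exact ⟨Nat.succ_ne_zero _, hj⟩
  · intro i j hij
    exact Fin.ext (Nat.succ_injective hij)

theorem brokenWheel_hom_iff {n : ℕ} {m : ℕ} (f : Fin (n + 1) → Fin m) :
    (∀ a b, (brokenWheel n).Adj a b → f a ≠ f b) ↔ IsHubColoring (f 0) n f := by
  have hadj : ∀ a b, (brokenWheel n).Adj a b ↔ a ≠ b ∧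
      ((a.val = 0 ∨ (a.val ≠ 0 ∧ a.val + 1 = b.val)) ∨
        (b.val = 0 ∨ (b.val ≠ 0 ∧ b.val + 1 = a.val))) := fun a b => Iff.rfl
  constructor
  · intro H
    refine ⟨rfl, fun i => (H 0 i.succ ?_).symm, fun i => H _ _ ?_⟩
    · rw [hadj]
      exact ⟨(Fin.succ_ne_zero i).symm, Or.inl (Or.inl rfl)⟩
    · rw [hadj]
      refine ⟨Fin.castSucc_lt_succ.ne, Or.inl ?_⟩
      simp only [Fin.val_castSucc, Fin.val_succ, and_true]
      omega
  · rintro ⟨-, h1, h2⟩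
    have key : ∀ a b : Fin (n + 1), a ≠ b → (a.val = 0 ∨ (a.val ≠ 0 ∧ a.val + 1 = b.val)) →
        f a ≠ f b := by
      rintro a b hab (h | ⟨-, h⟩)
      · obtain rfl : a = 0 := Fin.ext h
        obtain ⟨j, rfl⟩ := Fin.exists_succ_eq.2 hab.symm
        exact (h1 j).symm
      · have := h2 ⟨a.val, by omega⟩
        have hb : b = Fin.succ ⟨a.val, by omega⟩ := Fin.ext h.symm
        rw [hb]
        exact this
    intro a b hab
    obtain ⟨hne, h | h⟩ := (hadj a b).1 hab
    · exact key a b hne h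
    · exact (key b a hne.symm h).symm

open Classical in
theorem card_hom_eq {n m : ℕ} {A B : Fin m} (hAB : A ≠ B) (k : ℕ) :
    Nat.card {f : brokenWheel n →g (⊤ : SimpleGraph (Fin m)) //
        f ⟨0, Nat.succ_pos n⟩ ∈ ({A, B} : Set (Fin m)) ∧ bwEdgeCount n m A B ⇑f = k} =
      (Finset.univ.filter fun f : Fin (n + 1) → Fin m =>
        IsHubColoring A n f ∧ (colorSet B f).card = k).card +
      (Finset.univ.filter fun f : Fin (n + 1) → Fin m =>
        IsHubColoring B n f ∧ (colorSet A f).card = k).card := by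
  have hdisj : Disjoint
      (Finset.univ.filter fun f : Fin (n + 1) → Fin m =>
        IsHubColoring A n f ∧ (colorSet B f).card = k)
      (Finset.univ.filter fun f : Fin (n + 1) → Fin m =>
        IsHubColoring B n f ∧ (colorSet A f).card = k) := by
    rw [Finset.disjoint_filter]
    rintro f - ⟨h, -⟩ ⟨h', -⟩
    exact hAB (h.1.symm.trans h'.1)
  have hmem : ∀ f : Fin (n + 1) → Fin m,
      ((∀ a b, (brokenWheel n).Adj a b → f a ≠ f b) ∧
        (f 0 = A ∨ f 0 = B) ∧ bwEdgeCount n m A B f = k) ↔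
      (IsHubColoring A n f ∧ (colorSet B f).card = k) ∨
        (IsHubColoring B n f ∧ (colorSet A f).card = k) := by
    intro f
    rw [brokenWheel_hom_iff]
    constructor
    · rintro ⟨hf, h | h, hk⟩ <;> rw [h] at hf
      · exact Or.inl ⟨hf, by rw [← bwEdgeCount_of_isHubColoring hAB rfl hf, hk]⟩
      · exact Or.inr ⟨hf,
          by rw [← bwEdgeCount_of_isHubColoring hAB.symm (Finset.pair_comm B A) hf, hk]⟩
    · rintro (⟨hf, hk⟩ | ⟨hf, hk⟩)
      · rw [hf.1]
        exact ⟨hf, Or.inl rfl, by rw [bwEdgeCount_of_isHubColoring hAB rfl hf, hk]⟩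
      · rw [hf.1]
        exact ⟨hf, Or.inr rfl,
          by rw [bwEdgeCount_of_isHubColoring hAB.symm (Finset.pair_comm B A) hf, hk]⟩
  rw [← Finset.card_union_of_disjoint hdisj, ← Finset.filter_or, ← Fintype.card_subtype,
    ← Nat.card_eq_fintype_card]
  refine Nat.card_congr
    { toFun := fun f => ⟨f.1, (hmem f.1).1 ⟨fun a b hab => f.1.map_adj hab, f.2⟩⟩
      invFun := fun f =>
        ⟨⟨f.1, fun {a b} hab => ((hmem f.1).2 f.2).1 a b hab⟩, ((hmem f.1).2 f.2).2⟩
      left_inv := fun _ => rfl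
      right_inv := fun _ => rfl }

theorem sum_prod_stepWeight_valueSet (m l n : ℕ) :
    2 * ∑ c ∈ Finset.univ.filter (fun c : Fin (l + 1) → Fin (n + 1) =>
        (∀ a b, a < b → c a < c b) ∧ 1 ≤ (c 0).val),
          ∏ i ∈ Finset.range n, stepWeight m (valueSet c) i =
      2 * (∑ c ∈ Finset.univ.filter (fun c : Fin (l + 1) → Fin (n + 1) =>
            SeqOKGt1 c ∧ (c 0).val = 1 ∧ (c (Fin.last l)).val = n),
          hubGapProd m c)
      + 2 * (∑ c ∈ Finset.univ.filter (fun c : Fin (l + 1) → Fin (n + 1) =>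
            SeqOKGt1 c ∧ 1 < (c 0).val ∧ (c (Fin.last l)).val = n),
          (m - 2) * (m - 3) ^ ((c 0).val - 2) * hubGapProd m c)
      + 2 * (∑ c ∈ Finset.univ.filter (fun c : Fin (l + 1) → Fin (n + 1) =>
            SeqOKGt1 c ∧ (c 0).val = 1 ∧ (c (Fin.last l)).val < n),
          hubGapProd m c * ((m - 2) * (m - 3) ^ (n - (c (Fin.last l)).val - 1)))
      + 2 * (∑ c ∈ Finset.univ.filter (fun c : Fin (l + 1) → Fin (n + 1) =>
            SeqOKGt1 c ∧ 1 < (c 0).val ∧ (c (Fin.last l)).val < n),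
          (m - 2) ^ 2 * (m - 3) ^ ((c 0).val + n - (c (Fin.last l)).val - 3)
            * hubGapProd m c) := by
  simp only [← mul_add, Finset.sum_filter, ← Finset.sum_add_distrib]
  congr 1
  refine Finset.sum_congr rfl fun c _ => ?_
  by_cases hc : SeqOKGt1 c
  · have hln : (c (Fin.last l)).val ≤ n := Nat.lt_succ_iff.1 (c (Fin.last l)).isLt
    by_cases h1 : 1 ≤ (c 0).val
    · rw [if_pos ⟨hc.1, h1⟩, prod_stepWeight_valueSet m c hc h1]
      simp only [eq_true hc, true_and]
      rcases h1.eq_or_lt with h | h <;> rcases hln.eq_or_lt with h' | h'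
      · simp [← h, h']
      · simp [← h, h', h'.ne]
      · simp [h, h.ne', h']
      · have he : (c 0).val + n - (c (Fin.last l)).val - 3 =
            ((c 0).val - 2) + (n - (c (Fin.last l)).val - 1) := by omega
        simp only [h, h.ne', h', h'.ne, if_false, if_true, and_self, and_false, and_true, he,
          pow_add]
        ring
    · have hne : (c 0).val ≠ 1 := by omega
      have hlt : ¬ 1 < (c 0).val := by omega
      simp only [h1, hne, hlt, and_false, false_and, if_false, add_zero]
  · simp only [hc, false_and, if_false, add_zero, ite_eq_right_iff]
    exact fun h => prod_stepWeight_valueSet_eq_zero m c h.1 hc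

/-- For `n ≥ 3`, `m ≥ 3`, distinct vertices `A`, `B` of `K_m`, and `1 ≤ k ≤ n'`
(where `n = 2n'` if `n` is even and `n = 2n' - 1` if `n` is odd): the number of graph
homomorphisms `f : BW_n → K_m` mapping the hub into `{A, B}` and mapping exactly `k`
edges of `BW_n` onto `{A, B}` is given by the four-fold sum over strictly increasing
sequences `i_1 < ⋯ < i_k` with `i_j - i_{j-1} > 1`; moreover for `n' < k ≤ n` there are
no such homomorphisms. -/
theorem stmt12 (n m n' k : ℕ) (hn : 3 ≤ n) (hm : 3 ≤ m)
    (A B : Fin m) (hAB : A ≠ B)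
    (heven : Even n → n = 2 * n') (hodd : ¬ Even n → n = 2 * n' - 1)
    (hk1 : 1 ≤ k) (hk2 : k ≤ n')
    (N : ℕ → ℕ)
    (hN : ∀ j : ℕ, N j = Nat.card
      {f : brokenWheel n →g (⊤ : SimpleGraph (Fin m)) //
        f ⟨0, Nat.succ_pos n⟩ ∈ ({A, B} : Set (Fin m)) ∧ bwEdgeCount n m A B ⇑f = j}) :
    (N k =
        2 * (∑ c ∈ Finset.univ.filter (fun c : Fin k → Fin (n + 1) =>
              SeqOKGt1 c ∧ (c ⟨0, by omega⟩).val = 1 ∧ (c ⟨k - 1, by omega⟩).val = n),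
            hubGapProd m c)
        + 2 * (∑ c ∈ Finset.univ.filter (fun c : Fin k → Fin (n + 1) =>
              SeqOKGt1 c ∧ 1 < (c ⟨0, by omega⟩).val ∧ (c ⟨k - 1, by omega⟩).val = n),
            (m - 2) * (m - 3) ^ ((c ⟨0, by omega⟩).val - 2) * hubGapProd m c)
        + 2 * (∑ c ∈ Finset.univ.filter (fun c : Fin k → Fin (n + 1) =>
              SeqOKGt1 c ∧ (c ⟨0, by omega⟩).val = 1 ∧ (c ⟨k - 1, by omega⟩).val < n),
            hubGapProd m c * ((m - 2) * (m - 3) ^ (n - (c ⟨k - 1, by omega⟩).val - 1)))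
        + 2 * (∑ c ∈ Finset.univ.filter (fun c : Fin k → Fin (n + 1) =>
              SeqOKGt1 c ∧ 1 < (c ⟨0, by omega⟩).val ∧ (c ⟨k - 1, by omega⟩).val < n),
            (m - 2) ^ 2 * (m - 3) ^ ((c ⟨0, by omega⟩).val + n - (c ⟨k - 1, by omega⟩).val - 3)
              * hubGapProd m c))
    ∧ (∀ j : ℕ, n' < j → j ≤ n → N j = 0) := by
  constructor
  · obtain ⟨l, rfl⟩ : ∃ l, k = l + 1 := ⟨k - 1, by omega⟩
    refine Eq.trans ?_ (sum_prod_stepWeight_valueSet m l n)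
    rw [hN, card_hom_eq hAB, card_hubColoring hAB, card_hubColoring hAB.symm, ← two_mul,
      sum_powersetCard_eq_sum_strictMono fun S => ∏ i ∈ Finset.range n, stepWeight m S i]
  · intro j hj _
    have hn' : n + 1 < 2 * j := by
      by_cases h : Even n
      · have := heven h
        omega
      · have := hodd h
        omega
    rw [hN, card_hom_eq hAB, Nat.add_eq_zero_iff]
    simp only [Finset.card_eq_zero, Finset.filter_eq_empty_iff]
    constructor
    · rintro f - ⟨hf, rfl⟩
      exact absurd (two_mul_card_colorSet_le (o := B) hf.2.2) (by omega)
    · rintro f - ⟨hf, rfl⟩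
      exact absurd (two_mul_card_colorSet_le (o := A) hf.2.2) (by omega)
end

section
/- Let n ≥ 3 and m ≥ 3 be integers, let A, B be the two endpoints of the deleted edge of K_m (i.e. a fixed pair of adjacent vertices of K_m), and let 1 ≤ k ≤ n' where n = 2n' if n is even and n = 2n'+1 if n is odd. Then the number of graph homomorphisms f : W_n → K_m that map the hub into {A, B} and map exactly k edges of W_n onto {A, B} equals 2·Σ' (m−2)(m−3)^{i_1−2}·[Π_j (m−2)(m−3)^{i_j−i_{j−1}−2}] + 2·Σ'' [Π_j (m−2)(m−3)^{i_j−i_{j−1}−2}]·(m−2)(m−3)^{n−i_k−1} + 2·Σ''' (m−2)(m−3)^{i_1+n−i_k−2}·[Π_j (m−2)(m−3)^{i_j−i_{j−1}−2}], where every sum ranges over strictly increasing integer sequences i_1 < i_2 < ⋯ < i_k satisfying i_j − i_{j−1} > 1 for 2 ≤ j ≤ k; in Σ' the range is 1 < i_1 < ⋯ < i_k = n, in Σ'' it is 1 = i_1 < ⋯ < i_k < n, in Σ''' it is 1 < i_1 < ⋯ < i_k < n; and each product Π_j runs over the indices 2 ≤ j ≤ k (an empty product equals 1). Moreover, for n'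 < k ≤ n there are no such homomorphisms. -/
/-- The wheel `W_n` on `n` spokes: vertex `0` is the hub, adjacent to all of
`1, …, n`; the cycle part has edges `i(i+1)` for `1 ≤ i ≤ n-1` together with `n1`. -/
def wheelGraph (n : ℕ) : SimpleGraph (Fin (n + 1)) :=
  SimpleGraph.fromRel (fun a b =>
    a.val = 0 ∨ (a.val ≠ 0 ∧ a.val + 1 = b.val) ∨ (a.val = n ∧ b.val = 1))

/-- The number of edges of the wheel `W_n` (spokes `0i`, cycle edges `i(i+1)` and `n1`)
that `f` maps onto the pair `{A, B}`. -/
def wEdgeCount (n m : ℕ) (A B : Fin m) (f : Fin (n + 1) → Fin m) : ℕ :=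
  (Finset.univ.filter (fun i : Fin (n + 1) =>
      i.val ≠ 0 ∧ ({f ⟨0, Nat.succ_pos n⟩, f i} : Finset (Fin m)) = {A, B})).card
  + (Finset.univ.filter (fun i : Fin n =>
      i.val ≠ 0 ∧ ({f ⟨i.val, Nat.lt_succ_of_lt i.isLt⟩,
                    f ⟨i.val + 1, Nat.succ_lt_succ i.isLt⟩} : Finset (Fin m)) = {A, B})).card
  + (if ({f ⟨n, Nat.lt_succ_self n⟩, f ⟨1 % (n + 1), Nat.mod_lt 1 (Nat.succ_pos n)⟩}
          : Finset (Fin m)) = {A, B} then 1 else 0)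

open Finset

/-- A colouring `h` of the path on `Fin (t + 1)` is proper, avoids `A`, and takes the value `B`
exactly at the positions in `p`. -/
def IsPathColoring {m : ℕ} (A B : Fin m) (p : ℕ → Prop) (t : ℕ) (h : Fin (t + 1) → Fin m) : Prop :=
  (∀ i, h i = B ↔ p i) ∧ (∀ i, h i ≠ A) ∧ ∀ i : Fin t, h i.castSucc ≠ h i.succ

lemma isPathColoring_succ {m : ℕ} (A B : Fin m) (p : ℕ → Prop) (t : ℕ)
    (h : Fin (t + 2) → Fin m) :
    IsPathColoring A B p (t + 1) h ↔ IsPathColoring A B p t (Fin.init h) ∧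
      (h (Fin.last _) = B ↔ p (t + 1)) ∧ h (Fin.last _) ≠ A ∧
      h (Fin.last t).castSucc ≠ h (Fin.last _) := by
  unfold IsPathColoring
  rw [Fin.forall_fin_succ', Fin.forall_fin_succ' (P := fun i => h i ≠ A),
    Fin.forall_fin_succ' (P := fun i : Fin (t + 1) => h i.castSucc ≠ h i.succ)]
  simp only [Fin.init, Fin.val_castSucc, Fin.val_last, Fin.succ_last, Fin.succ_castSucc]
  tauto

open Classical in
lemma card_extend {m : ℕ} {A B : Fin m} (hAB : A ≠ B) (p : ℕ → Prop)
    (hp : ∀ t, p t → ¬ p (t + 1)) (t : ℕ) (h : Fin (t + 1) → Fin m)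
    (hh : IsPathColoring A B p t h) :
    #{x : Fin m | (x = B ↔ p (t + 1)) ∧ x ≠ A ∧ h (Fin.last t) ≠ x} =
      if p (t + 1) then 1 else if p t then m - 2 else m - 3 := by
  obtain ⟨hB, hA, -⟩ := hh
  have hBt := hB (Fin.last t)
  have hAt := hA (Fin.last t)
  rw [Fin.val_last] at hBt
  split_ifs with h1 h2
  · rw [card_eq_one]
    refine ⟨B, ?_⟩
    have : ¬ p t := fun h => hp t h h1
    ext x
    simp only [mem_filter, mem_univ, true_and, mem_singleton, h1, iff_true]
    grind
  · have : ({x : Fin m | (x = B ↔ p (t + 1)) ∧ x ≠ A ∧ h (Fin.last t) ≠ x} : Finset _) =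
        ({A, B} : Finset (Fin m))ᶜ := by
      ext x
      simp only [mem_filter, mem_univ, true_and, mem_compl, mem_insert, mem_singleton]
      grind
    rw [this, card_compl, card_pair hAB, Fintype.card_fin]
  · have : ({x : Fin m | (x = B ↔ p (t + 1)) ∧ x ≠ A ∧ h (Fin.last t) ≠ x} : Finset _) =
        ({h (Fin.last t), A, B} : Finset (Fin m))ᶜ := by
      ext x
      simp only [mem_filter, mem_univ, true_and, mem_compl, mem_insert, mem_singleton]
      grind
    have h3 : #({h (Fin.last t), A, B} : Finset (Fin m)) = 3 :=
      card_eq_three.2 ⟨_, _, _, hAt, fun h => h2 (hBt.1 h), hAB, rfl⟩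
    rw [this, card_compl, h3, Fintype.card_fin]

open Classical in
lemma card_isPathColoring_succ {m : ℕ} {A B : Fin m} (hAB : A ≠ B) (p : ℕ → Prop)
    (hp : ∀ t, p t → ¬ p (t + 1)) (t : ℕ) :
    #{h | IsPathColoring A B p (t + 1) h} = #{h | IsPathColoring A B p t h} *
      if p (t + 1) then 1 else if p t then m - 2 else m - 3 := by
  have key : #{h | IsPathColoring A B p (t + 1) h} =
      #(({h | IsPathColoring A B p t h} : Finset (Fin (t + 1) → Fin m)).sigma fun h =>
        ({x : Fin m | (x = B ↔ p (t + 1)) ∧ x ≠ A ∧ h (Fin.last t) ≠ x} : Finset (Fin m))) := by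
    refine card_bij' (fun h _ => ⟨Fin.init h, h (Fin.last _)⟩)
      (fun q _ => Fin.snoc (α := fun _ => Fin m) q.1 q.2) ?_ ?_ ?_ ?_
    · intro h hh
      rw [mem_filter, isPathColoring_succ] at hh
      exact mem_sigma.2 ⟨mem_filter.2 ⟨mem_univ _, hh.2.1⟩, mem_filter.2 ⟨mem_univ _, hh.2.2⟩⟩
    · rintro ⟨h, x⟩ hh
      simp only [mem_sigma, mem_filter, mem_univ, true_and] at hh
      simpa only [isPathColoring_succ, mem_filter, mem_univ, true_and, Fin.init_snoc,
        Fin.snoc_last, Fin.snoc_castSucc] using hh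
    · intro h _
      exact Fin.snoc_init_self h
    · rintro ⟨h, x⟩ _
      simp
  rw [key, card_sigma, sum_congr rfl, sum_const, smul_eq_mul]
  intro h hh
  exact card_extend hAB p hp t h (mem_filter.1 hh).2

open Classical in
lemma card_isPathColoring {m : ℕ} {A B : Fin m} (hAB : A ≠ B) (p : ℕ → Prop) (hp0 : p 0)
    (hp : ∀ t, p t → ¬ p (t + 1)) (t : ℕ) :
    ∃ e, e + Nat.count p t + Nat.count p (t + 1) = t + 1 ∧
      #{h | IsPathColoring A B p t h} = (m - 2) ^ Nat.count p t * (m - 3) ^ e := by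
  induction t with
  | zero =>
    refine ⟨0, by simp [Nat.count_succ, hp0], ?_⟩
    simp only [Nat.count_zero, pow_zero, mul_one, card_eq_one]
    refine ⟨fun _ => B, ?_⟩
    ext h
    have hp0' : ∀ i : Fin 1, p i := fun i => by rwa [Fin.val_eq_zero]
    simp only [IsPathColoring, mem_filter, mem_univ, true_and, mem_singleton, funext_iff,
      hp0', iff_true, IsEmpty.forall_iff, and_true, Nat.reduceAdd]
    exact ⟨fun h => h.1, fun h => ⟨h, fun i => by rw [h i]; exact hAB.symm⟩⟩
  | succ t ih =>
    obtain ⟨e, he, hc⟩ := ih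
    have h1 := Nat.count_succ p t
    have h2 := Nat.count_succ p (t + 1)
    rw [card_isPathColoring_succ hAB p hp, hc]
    by_cases hs : p (t + 1)
    · have : ¬ p t := fun h => hp t h hs
      simp only [this, hs, if_true, if_false, add_zero] at h1 h2 ⊢
      exact ⟨e, by omega, by rw [h1, mul_one]⟩
    · by_cases ht : p t
      · simp only [ht, hs, if_true, if_false, add_zero] at h1 h2 ⊢
        exact ⟨e, by omega, by rw [h1]; ring⟩
      · simp only [ht, hs, if_false, add_zero] at h1 h2 ⊢
        exact ⟨e + 1, by omega, by rw [h1]; ring⟩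

/-- A proper colouring of the cycle on `Fin (t + 1)` avoiding `A`. -/
def IsCycleColoring {m t : ℕ} (A : Fin m) (g : Fin (t + 1) → Fin m) : Prop :=
  (∀ i, g i ≠ A) ∧ ∀ i, g i ≠ g (i + 1)

/-- No two cyclically consecutive elements of `Fin (t + 1)` lie in `S`. -/
def IsCycleIndep {t : ℕ} (S : Finset (Fin (t + 1))) : Prop :=
  ∀ i ∈ S, i + 1 ∉ S

lemma forall_fin_add_one {t : ℕ} (P : Fin (t + 1) → Fin (t + 1) → Prop) :
    (∀ i, P i (i + 1)) ↔ (∀ i : Fin t, P i.castSucc i.succ) ∧ P (Fin.last t) 0 := by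
  rw [Fin.forall_fin_succ']
  simp [Fin.coeSucc_eq_succ]

lemma IsCycleIndep.two_mul_card_le {t : ℕ} {S : Finset (Fin (t + 1))} (hS : IsCycleIndep S) :
    2 * #S ≤ t + 1 := by
  have hd : Disjoint S (S.map (Equiv.addRight (1 : Fin (t + 1))).toEmbedding) := by
    rw [disjoint_left]
    intro i hi hi'
    obtain ⟨j, hj, rfl⟩ := mem_map.1 hi'
    exact hS j hj hi
  have := card_le_univ (S ∪ S.map (Equiv.addRight (1 : Fin (t + 1))).toEmbedding)
  rw [card_union_of_disjoint hd, card_map, Fintype.card_fin] at this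
  omega

open Classical in
lemma card_isCycleColoring_of_zero_mem {m t : ℕ} {A B : Fin m} (hAB : A ≠ B)
    {S : Finset (Fin (t + 1))} (h0 : 0 ∈ S) (hS : IsCycleIndep S) :
    #{g : Fin (t + 1) → Fin m | IsCycleColoring A g ∧ ∀ i, g i = B ↔ i ∈ S} =
      (m - 2) ^ #S * (m - 3) ^ (t + 1 - 2 * #S) := by
  have hS' := (forall_fin_add_one fun i j => i ∈ S → j ∉ S).1 hS
  obtain ⟨p, hpd⟩ : ∃ p : ℕ → Prop, ∀ s, p s ↔ ∃ h : s < t + 1, (⟨s, h⟩ : Fin (t + 1)) ∈ S :=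
    ⟨_, fun _ => Iff.rfl⟩
  have hpS : ∀ i : Fin (t + 1), p i ↔ i ∈ S :=
    fun i => (hpd i).trans ⟨fun ⟨_, h⟩ => h, fun h => ⟨i.2, h⟩⟩
  have hp : ∀ s, p s → ¬ p (s + 1) := by
    intro s
    rw [hpd, hpd]
    rintro ⟨h1, h2⟩ ⟨h3, h4⟩
    exact hS'.1 ⟨s, by omega⟩ h2 h4
  have hlast : ¬ p t := fun h => hS'.2 ((hpS (Fin.last t)).1 h) h0
  obtain ⟨e, he, hc⟩ := card_isPathColoring hAB p ((hpS 0).2 h0) hp t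
  have hcount : Nat.count p (t + 1) = #S := by
    rw [Nat.count_eq_card_filter_range, ← card_map Fin.valEmbedding]
    congr 1
    ext s
    simp only [mem_filter, mem_range, mem_map, Fin.valEmbedding_apply]
    constructor
    · rintro ⟨-, hs⟩
      obtain ⟨_, hs⟩ := (hpd s).1 hs
      exact ⟨_, hs, rfl⟩
    · rintro ⟨i, hi, rfl⟩
      exact ⟨i.2, (hpS i).2 hi⟩
  have h1 := Nat.count_succ p t
  rw [if_neg hlast, add_zero, hcount] at h1
  rw [← h1, hcount] at he
  rw [← h1] at hc
  have : e = t + 1 - 2 * #S := by omega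
  rw [← this, ← hc]
  congr 1
  ext g
  simp only [mem_filter, mem_univ, true_and]
  simp only [IsCycleColoring, IsPathColoring, hpS,
    forall_fin_add_one fun i j => g i ≠ g j]
  have : (∀ i, g i = B ↔ i ∈ S) → g (Fin.last t) ≠ g 0 := by
    intro h h'
    have := (h 0).2 h0
    exact hlast ((hpS (Fin.last t)).2 ((h _).1 (h'.trans this)))
  tauto

open Classical in
lemma card_isCycleColoring {m t : ℕ} {A B : Fin m} (hAB : A ≠ B)
    {S : Finset (Fin (t + 1))} (hne : S.Nonempty) (hS : IsCycleIndep S) :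
    #{g : Fin (t + 1) → Fin m | IsCycleColoring A g ∧ ∀ i, g i = B ↔ i ∈ S} =
      (m - 2) ^ #S * (m - 3) ^ (t + 1 - 2 * #S) := by
  obtain ⟨s, hs⟩ := hne
  let σ : Fin (t + 1) ≃ Fin (t + 1) := Equiv.addRight s
  have hσ : ∀ i, σ (i + 1) = σ i + 1 := fun i => add_right_comm i 1 s
  have h0 : 0 ∈ S.map σ.symm.toEmbedding := by
    rw [mem_map_equiv]; simpa [σ] using hs
  have hI : IsCycleIndep (S.map σ.symm.toEmbedding) := by
    intro i hi
    simp only [mem_map_equiv, Equiv.symm_symm] at hi ⊢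
    rw [hσ]
    exact hS _ hi
  have key := card_isCycleColoring_of_zero_mem hAB h0 hI
  rw [card_map] at key
  rw [← key]
  refine card_equiv (σ.symm.arrowCongr (Equiv.refl _)) fun g => ?_
  simp only [mem_filter, mem_univ, true_and]
  simp only [IsCycleColoring, mem_map_equiv, Equiv.symm_symm, Equiv.arrowCongr_apply, Equiv.coe_refl, Function.comp_apply, id, hσ]
  rw [σ.forall_congr_right (q := fun i => g i ≠ A),
    σ.forall_congr_right (q := fun i => g i ≠ g (i + 1)),
    σ.forall_congr_right (q := fun i => g i = B ↔ i ∈ S)]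

open Classical in
/-- The number of `k`-element sets of pairwise nonconsecutive vertices of the `(t + 1)`-cycle. -/
noncomputable def cycleIndepCount (t k : ℕ) : ℕ :=
  #{S : Finset (Fin (t + 1)) | IsCycleIndep S ∧ #S = k}

open Classical in
lemma card_isCycleColoring_card {m t k : ℕ} (hk : 1 ≤ k) {A B : Fin m} (hAB : A ≠ B) :
    #{g : Fin (t + 1) → Fin m | IsCycleColoring A g ∧ #{i | g i = B} = k} =
      cycleIndepCount t k * ((m - 2) ^ k * (m - 3) ^ (t + 1 - 2 * k)) := by
  rw [cycleIndepCount, ← smul_eq_mul, ← sum_const,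
    card_eq_sum_card_fiberwise (f := fun g => ({i | g i = B} : Finset _))
      (t := {S : Finset (Fin (t + 1)) | IsCycleIndep S ∧ #S = k})]
  · refine sum_congr rfl fun S hS => ?_
    obtain ⟨hI, rfl⟩ := (mem_filter.1 hS).2
    rw [← card_isCycleColoring hAB (card_pos.1 hk) hI]
    congr 1
    ext g
    simp only [mem_filter, mem_univ, true_and, Finset.ext_iff]
    constructor
    · rintro ⟨⟨h1, -⟩, h2⟩
      exact ⟨h1, h2⟩
    · rintro ⟨h1, h2⟩
      refine ⟨⟨h1, congrArg card ?_⟩, h2⟩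
      ext i; simpa using h2 i
  · intro g hg
    simp only [coe_filter, mem_univ, true_and, Set.mem_ofPred_eq] at hg ⊢
    refine ⟨fun i hi hi' => ?_, hg.2⟩
    simp only [mem_filter, mem_univ, true_and] at hi hi'
    exact hg.1.2 i (hi.trans hi'.symm)
lemma val_add_eq_of_seqOK {k n : ℕ} {c : Fin (k + 1) → Fin n} (hc : SeqOKGt1 c) (x : ℕ → ℕ)
    (hx : ∀ j : Fin (k + 1), x j = (c j).val) :
    x 0 + 2 * k + ∑ j : Fin k, (gapAt c j.succ - 2) = x k := by
  have hgap : ∀ j : Fin k, gapAt c j.succ = x (j + 1) - x j ∧ 1 < gapAt c j.succ := by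
    intro j
    refine ⟨?_, hc.2 j.succ (by simp)⟩
    have h1 := hx j.succ
    have h2 := hx j.castSucc
    rw [Fin.val_succ] at h1
    rw [Fin.val_castSucc] at h2
    rw [h1, h2]
    rfl
  have key : ∀ s ≤ k, x 0 + 2 * s + ∑ j ∈ Finset.range s, (x (j + 1) - x j - 2) = x s := by
    intro s
    induction s with
    | zero => simp
    | succ s ih =>
      intro hs
      have := ih (by omega)
      have hg := hgap ⟨s, hs⟩
      simp only at hg
      rw [sum_range_succ]
      omega
  rw [← key k le_rfl, ← Fin.sum_univ_eq_sum_range (fun j => x (j + 1) - x j - 2)]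
  congr 1
  exact sum_congr rfl fun j _ => by rw [(hgap j).1]

lemma hubGapProd_eq (m : ℕ) {k n : ℕ} {c : Fin (k + 1) → Fin n} (hc : SeqOKGt1 c) :
    ∃ e, (c 0).val + 2 * k + e = (c (Fin.last k)).val ∧
      hubGapProd m c = (m - 2) ^ k * (m - 3) ^ e := by
  refine ⟨∑ j : Fin k, (gapAt c j.succ - 2), ?_, ?_⟩
  · have := val_add_eq_of_seqOK hc (fun s => if h : s < k + 1 then (c ⟨s, h⟩).val else 0)
      (fun j => dif_pos j.isLt)
    simpa [Fin.last] using this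
  · simp [hubGapProd, Fin.prod_univ_succ, prod_mul_distrib, prod_pow_eq_pow_sum]

/-- A sequence `i_1 < ⋯ < i_{k+1}` of vertices in `{1, …, n}` whose consecutive gaps, including
the gap from `i_{k+1}` back to `i_1`, are at least two. -/
def IsCycleSeq {k n : ℕ} (c : Fin (k + 1) → Fin (n + 1)) : Prop :=
  SeqOKGt1 c ∧ 1 ≤ (c 0).val ∧ ¬ ((c 0).val = 1 ∧ (c (Fin.last k)).val = n)

lemma wrap_mul_hubGapProd (m : ℕ) {k n : ℕ} {c : Fin (k + 1) → Fin (n + 1)} (hc : IsCycleSeq c) :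
    (m - 2) * (m - 3) ^ ((c 0).val + n - (c (Fin.last k)).val - 2) * hubGapProd m c =
      (m - 2) ^ (k + 1) * (m - 3) ^ (n - 2 * (k + 1)) := by
  obtain ⟨hs, h1, h2⟩ := hc
  obtain ⟨e, he, hp⟩ := hubGapProd_eq m hs
  have := (c (Fin.last k)).isLt
  have : n - 2 * (k + 1) = ((c 0).val + n - (c (Fin.last k)).val - 2) + e := by omega
  rw [hp, this, pow_add, pow_succ]
  ring

lemma val_add_two_le_of_seqOK {k n : ℕ} {c : Fin k → Fin n} (hc : SeqOKGt1 c) {a b : Fin k}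
    (hab : a < b) : (c a).val + 2 ≤ (c b).val := by
  have hb : b.val ≠ 0 := by have := Fin.lt_def.1 hab; omega
  have h := hc.2 b hb
  unfold gapAt at h
  have hm : StrictMono c := fun a b => hc.1 a b
  have : c a ≤ c ⟨b.val - 1, by omega⟩ := hm.monotone (by rw [Fin.le_def]; simp only; omega)
  have := Fin.le_def.1 this
  omega

open Classical in
lemma card_isCycleSeq (t k : ℕ) :
    #{c : Fin (k + 1) → Fin (t + 1 + 1) | IsCycleSeq c} = cycleIndepCount t (k + 1) := by
  have hpos : ∀ c : Fin (k + 1) → Fin (t + 1 + 1), IsCycleSeq c → ∀ j, ∃ i : Fin (t + 1),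
      c j = i.succ := by
    intro c hc j
    have hm : StrictMono c := fun a b => hc.1.1 a b
    have := Fin.le_def.1 (hm.monotone (Fin.zero_le j))
    refine ⟨(c j).pred ?_, (Fin.succ_pred _ _).symm⟩
    have := hc.2.1
    rw [Ne, Fin.ext_iff, Fin.val_zero]
    omega
  refine card_bij (fun c _ => ({i | ∃ j, c j = i.succ} : Finset (Fin (t + 1)))) ?_ ?_ ?_
  · intro c hc
    replace hc := (mem_filter.1 hc).2
    have hm : StrictMono c := fun a b => hc.1.1 a b
    simp only [mem_filter, mem_univ, true_and]
    constructor
    · refine (forall_fin_add_one fun i j => i ∈ _ → j ∉ _).2 ⟨?_, ?_⟩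
      · intro i
        simp only [mem_filter, mem_univ, true_and]
        rintro ⟨a, ha⟩ ⟨b, hb⟩
        have hab : a < b := by
          rw [← hm.lt_iff_lt, ha, hb, Fin.lt_def]
          simp
        have := val_add_two_le_of_seqOK hc.1 hab
        rw [ha, hb] at this
        simp at this
      · simp only [mem_filter, mem_univ, true_and]
        rintro ⟨a, ha⟩ ⟨b, hb⟩
        have h1 := Fin.le_def.1 (hm.monotone (Fin.zero_le b))
        have h2 := Fin.le_def.1 (hm.monotone (Fin.le_last a))
        rw [ha] at h2
        rw [hb] at h1
        simp only [Fin.val_succ, Fin.val_last, Fin.val_zero] at h1 h2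
        have := (c (Fin.last k)).isLt
        exact hc.2.2 ⟨le_antisymm h1 hc.2.1, by omega⟩
    · choose d hd using hpos c hc
      have hdi : Function.Injective d := fun a b h => hm.injective (by rw [hd, hd, h])
      have : ({i | ∃ j, c j = i.succ} : Finset (Fin (t + 1))) = univ.image d := by
        ext i; simp [hd]
      rw [this, card_image_of_injective _ hdi, card_univ, Fintype.card_fin]
  · intro c hc c' hc' h
    replace hc := (mem_filter.1 hc).2
    replace hc' := (mem_filter.1 hc').2
    have hm : StrictMono c := fun a b => hc.1.1 a b
    have hm' : StrictMono c' := fun a b => hc'.1.1 a b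
    refine (hm.range_inj hm').1 ?_
    simp only [Finset.ext_iff, mem_filter, mem_univ, true_and] at h
    ext x
    constructor
    · rintro ⟨j, rfl⟩
      obtain ⟨i, hi⟩ := hpos c hc j
      rw [hi]
      exact (h i).1 ⟨j, hi⟩
    · rintro ⟨j, rfl⟩
      obtain ⟨i, hi⟩ := hpos c' hc' j
      rw [hi]
      exact (h i).2 ⟨j, hi⟩
  · intro S hS
    obtain ⟨hI, hcard⟩ := (mem_filter.1 hS).2
    have hI' := (forall_fin_add_one fun i j => i ∈ S → j ∉ S).1 hI
    let d := S.orderEmbOfFin hcard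
    have hdS : ∀ j, d j ∈ S := S.orderEmbOfFin_mem hcard
    have hd : StrictMono d := d.strictMono
    refine ⟨fun j => (d j).succ, ?_, ?_⟩
    · simp only [mem_filter, mem_univ, true_and]
      refine ⟨⟨fun a b h => Fin.succ_lt_succ_iff.2 (hd h), fun j hj => ?_⟩, by simp, ?_⟩
      · have hlt : d ⟨j.val - 1, by omega⟩ < d j := hd (by rw [Fin.lt_def]; simp only; omega)
        simp only [gapAt, Fin.val_succ]
        have := Fin.lt_def.1 hlt
        by_contra hcon
        have hv : (d j).val = (d ⟨j.val - 1, by omega⟩).val + 1 := by omega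
        refine hI'.1 ⟨(d ⟨j.val - 1, by omega⟩).val, by omega⟩ (hdS _) ?_
        convert hdS j using 1
        exact Fin.ext hv.symm
      · simp only [Fin.val_succ]
        rintro ⟨h1, h2⟩
        refine hI'.2 ?_ ?_
        · convert hdS (Fin.last k) using 1
          exact Fin.ext (by simp; omega)
        · convert hdS 0 using 1
          exact Fin.ext (by simp; omega)
    · ext i
      simp only [mem_filter, mem_univ, true_and, Fin.succ_inj]
      exact Set.ext_iff.1 (S.range_orderEmbOfFin hcard) i

lemma pair_eq_pair_left_iff {α : Type*} [DecidableEq α] {A B x : α} :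
    ({A, x} : Finset α) = {A, B} ↔ x = B := by
  constructor
  · intro h
    have h1 : x ∈ ({A, B} : Finset α) := h ▸ by simp
    have h2 : B ∈ ({A, x} : Finset α) := h ▸ by simp
    simp only [mem_insert, mem_singleton] at h1 h2
    grind
  · rintro rfl; rfl

lemma pair_ne_of_ne {α : Type*} [DecidableEq α] {A B x y : α} (hx : x ≠ A) (hy : y ≠ A) :
    ({x, y} : Finset α) ≠ {A, B} := by
  intro h
  have : A ∈ ({x, y} : Finset α) := h ▸ by simp
  simp only [mem_insert, mem_singleton] at this
  grind

lemma wEdgeCount_of_hub {t m : ℕ} {A B : Fin m} {f : Fin (t + 1 + 1) → Fin m} (h0 : f 0 = A)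
    (hA : ∀ i : Fin (t + 1), f i.succ ≠ A) :
    wEdgeCount (t + 1) m A B f = #{i : Fin (t + 1) | f i.succ = B} := by
  have hA' : ∀ i : Fin (t + 1 + 1), i.val ≠ 0 → f i ≠ A := by
    intro i hi
    obtain ⟨j, rfl⟩ := Fin.exists_succ_eq.2 (fun h : i = 0 => hi (by simp [h]))
    exact hA j
  unfold wEdgeCount
  rw [if_neg (pair_ne_of_ne (hA' _ (by simp)) (hA' _ (by simp))), add_zero]
  rw [filter_false_of_mem (s := (univ : Finset (Fin (t + 1)))), card_empty, add_zero]
  · rw [Fin.card_filter_univ_succ]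
    simp [h0, pair_eq_pair_left_iff]
  · rintro i - ⟨hi, h⟩
    exact pair_ne_of_ne (hA' _ hi) (hA' _ (by simp)) h

lemma wheel_proper_iff {t m : ℕ} (ht : 1 ≤ t) (f : Fin (t + 1 + 1) → Fin m) :
    (∀ a b, (wheelGraph (t + 1)).Adj a b → f a ≠ f b) ↔
      IsCycleColoring (f 0) (fun i : Fin (t + 1) => f i.succ) := by
  unfold IsCycleColoring
  rw [forall_fin_add_one fun i j : Fin (t + 1) => f i.succ ≠ f j.succ]
  constructor
  · intro h
    simp only [wheelGraph, SimpleGraph.fromRel_adj] at h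
    refine ⟨fun i => (h 0 i.succ ⟨(Fin.succ_ne_zero i).symm, Or.inl (Or.inl rfl)⟩).symm,
      fun i => h _ _ ⟨?_, Or.inl (Or.inr (Or.inl ⟨Nat.succ_ne_zero _, rfl⟩))⟩,
      h _ _ ⟨?_, Or.inl (Or.inr (Or.inr ⟨rfl, rfl⟩))⟩⟩
    · exact fun h' => (Fin.castSucc_lt_succ (i := i)).ne (Fin.succ_injective _ h')
    · intro h'
      have := congrArg Fin.val (Fin.succ_injective _ h')
      simp only [Fin.val_last, Fin.val_zero] at this
      omega
  · rintro ⟨h1, h2, h3⟩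
    have key : ∀ a b : Fin (t + 1 + 1), a ≠ b → (a.val = 0 ∨ (a.val ≠ 0 ∧ a.val + 1 = b.val) ∨
        (a.val = t + 1 ∧ b.val = 1)) → f a ≠ f b := by
      rintro a b hab (h | ⟨h, h'⟩ | ⟨h, h'⟩)
      · obtain rfl : a = 0 := Fin.ext h
        obtain ⟨j, rfl⟩ := Fin.exists_succ_eq.2 hab.symm
        exact (h1 j).symm
      · have := h2 ⟨a.val - 1, by omega⟩
        convert this using 2
        · ext; simp; omega
        · ext; simp; omega
      · convert h3 using 2
        · ext; simpa using h
        · ext; simpa using h'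
    intro a b hab
    rw [wheelGraph, SimpleGraph.fromRel_adj] at hab
    rcases hab with ⟨hne, h | h⟩
    · exact key a b hne h
    · exact (key b a hne.symm h).symm

open Classical in
lemma card_wheelHom_hub {t m j : ℕ} (ht : 1 ≤ t) {A B : Fin m} :
    Nat.card {f : wheelGraph (t + 1) →g (⊤ : SimpleGraph (Fin m)) //
      f 0 = A ∧ wEdgeCount (t + 1) m A B ⇑f = j} =
    #{g : Fin (t + 1) → Fin m | IsCycleColoring A g ∧ #{i | g i = B} = j} := by
  rw [← Fintype.card_subtype, ← Nat.card_eq_fintype_card]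
  have hcol : ∀ f : wheelGraph (t + 1) →g (⊤ : SimpleGraph (Fin m)),
      IsCycleColoring (f 0) (fun i : Fin (t + 1) => f i.succ) :=
    fun f => (wheel_proper_iff ht f).1 fun a b h => (f.map_adj h).ne
  refine Nat.card_eq_of_bijective (fun f => ⟨fun i => f.1 i.succ, ?_⟩) ⟨?_, ?_⟩
  · obtain ⟨f, rfl, rfl⟩ := f
    exact ⟨hcol f, (wEdgeCount_of_hub rfl (hcol f).1).symm⟩
  · rintro ⟨f, hf, _⟩ ⟨f', hf', _⟩ h
    have h' := congrFun (Subtype.mk.inj h)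
    refine Subtype.ext (DFunLike.ext _ _ (Fin.cases ?_ h'))
    exact hf.trans hf'.symm
  · rintro ⟨g, hg, hj⟩
    have hp := (wheel_proper_iff ht (Fin.cons A g : Fin (t + 1 + 1) → Fin m)).2 (by simpa using hg)
    refine ⟨⟨⟨(Fin.cons A g : Fin (t + 1 + 1) → Fin m), @fun a b h => hp a b h⟩, rfl, ?_⟩, ?_⟩
    · refine (wEdgeCount_of_hub rfl hg.1).trans hj
    · rfl

lemma card_wheelHom {t m j : ℕ} (ht : 1 ≤ t) (hj : 1 ≤ j) {A B : Fin m} (hAB : A ≠ B) :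
    Nat.card {f : wheelGraph (t + 1) →g (⊤ : SimpleGraph (Fin m)) //
      f 0 ∈ ({A, B} : Set (Fin m)) ∧ wEdgeCount (t + 1) m A B ⇑f = j} =
    2 * (cycleIndepCount t j * ((m - 2) ^ j * (m - 3) ^ (t + 1 - 2 * j))) := by
  classical
  have hsymm : ∀ f, wEdgeCount (t + 1) m A B f = wEdgeCount (t + 1) m B A f := fun f => by
    simp only [wEdgeCount, pair_comm A B]
  have hA := (card_wheelHom_hub (j := j) (A := A) (B := B) ht).trans
    (card_isCycleColoring_card hj hAB)
  have hB := (card_wheelHom_hub (j := j) (A := B) (B := A) ht).trans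
    (card_isCycleColoring_card hj hAB.symm)
  simp only [← hsymm] at hB
  have : Finite (wheelGraph (t + 1) →g (⊤ : SimpleGraph (Fin m))) :=
    Finite.of_injective _ DFunLike.coe_injective
  have := Fintype.ofFinite (wheelGraph (t + 1) →g (⊤ : SimpleGraph (Fin m)))
  rw [two_mul]
  nth_rewrite 1 [← hA]
  rw [← hB]
  simp only [Nat.card_eq_fintype_card, Fintype.card_subtype]
  rw [← card_union_of_disjoint]
  · congr 1
    ext f
    simp only [mem_filter, mem_univ, true_and, mem_union, Set.mem_insert_iff,
      Set.mem_singleton_iff]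
    tauto
  · rw [disjoint_left]
    intro f h h'
    exact hAB ((mem_filter.1 h).2.1.symm.trans (mem_filter.1 h').2.1)

/-- For `n ≥ 3`, `m ≥ 3`, distinct vertices `A`, `B` of `K_m`, and `1 ≤ k ≤ n'`
(where `n = 2n'` if `n` is even and `n = 2n' + 1` if `n` is odd): the number of graph
homomorphisms `f : W_n → K_m` mapping the hub into `{A, B}` and mapping exactly `k`
edges of `W_n` onto `{A, B}` is given by the three-fold sum over strictly increasing
sequences `i_1 < ⋯ < i_k` with `i_j - i_{j-1} > 1`; moreover for `n' < k ≤ n` there are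
no such homomorphisms. -/
theorem stmt13 (n m n' k : ℕ) (hn : 3 ≤ n) (hm : 3 ≤ m)
    (A B : Fin m) (hAB : A ≠ B)
    (heven : Even n → n = 2 * n') (hodd : ¬ Even n → n = 2 * n' + 1)
    (hk1 : 1 ≤ k) (hk2 : k ≤ n')
    (N : ℕ → ℕ)
    (hN : ∀ j : ℕ, N j = Nat.card
      {f : wheelGraph n →g (⊤ : SimpleGraph (Fin m)) //
        f ⟨0, Nat.succ_pos n⟩ ∈ ({A, B} : Set (Fin m)) ∧ wEdgeCount n m A B ⇑f = j}) :
    (N k =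
        2 * (∑ c ∈ Finset.univ.filter (fun c : Fin k → Fin (n + 1) =>
              SeqOKGt1 c ∧ 1 < (c ⟨0, by omega⟩).val ∧ (c ⟨k - 1, by omega⟩).val = n),
            (m - 2) * (m - 3) ^ ((c ⟨0, by omega⟩).val - 2) * hubGapProd m c)
        + 2 * (∑ c ∈ Finset.univ.filter (fun c : Fin k → Fin (n + 1) =>
              SeqOKGt1 c ∧ (c ⟨0, by omega⟩).val = 1 ∧ (c ⟨k - 1, by omega⟩).val < n),
            hubGapProd m c * ((m - 2) * (m - 3) ^ (n - (c ⟨k - 1, by omega⟩).val - 1)))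
        + 2 * (∑ c ∈ Finset.univ.filter (fun c : Fin k → Fin (n + 1) =>
              SeqOKGt1 c ∧ 1 < (c ⟨0, by omega⟩).val ∧ (c ⟨k - 1, by omega⟩).val < n),
            (m - 2) * (m - 3) ^ ((c ⟨0, by omega⟩).val + n - (c ⟨k - 1, by omega⟩).val - 2)
              * hubGapProd m c))
    ∧ (∀ j : ℕ, n' < j → j ≤ n → N j = 0) := by
  classical
  obtain ⟨t, rfl⟩ : ∃ t, n = t + 1 := ⟨n - 1, by omega⟩
  obtain ⟨k, rfl⟩ : ∃ l, k = l + 1 := ⟨k - 1, by omega⟩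
  have hN' : ∀ j, 1 ≤ j → N j =
      2 * (cycleIndepCount t j * ((m - 2) ^ j * (m - 3) ^ (t + 1 - 2 * j))) :=
    fun j hj => (hN j).trans (card_wheelHom (by omega) hj hAB)
  constructor
  · have hlast : (⟨k + 1 - 1, by omega⟩ : Fin (k + 1)) = Fin.last k := rfl
    have hzero : (⟨0, by omega⟩ : Fin (k + 1)) = 0 := rfl
    simp only [hlast, hzero]
    rw [hN' _ hk1, ← card_isCycleSeq, ← smul_eq_mul (#_), ← sum_const, ← mul_add, ← mul_add]
    congr 1
    have hsplit : ({c : Fin (k + 1) → Fin (t + 1 + 1) | IsCycleSeq c} : Finset _) =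
        (({c | SeqOKGt1 c ∧ 1 < (c 0).val ∧ (c (Fin.last k)).val = t + 1} : Finset _) ∪
        ({c | SeqOKGt1 c ∧ (c 0).val = 1 ∧ (c (Fin.last k)).val < t + 1} : Finset _)) ∪
        ({c | SeqOKGt1 c ∧ 1 < (c 0).val ∧ (c (Fin.last k)).val < t + 1} : Finset _) := by
      ext c
      have := (c (Fin.last k)).isLt
      simp only [mem_union, mem_filter, mem_univ, true_and, ← and_or_left]
      refine and_congr_right fun _ => ?_
      omega
    have hw : ∀ c ∈ ({c : Fin (k + 1) → Fin (t + 1 + 1) | IsCycleSeq c} : Finset _), _ :=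
      fun c hc => (wrap_mul_hubGapProd m (mem_filter.1 hc).2).symm
    rw [sum_congr rfl hw, hsplit, sum_union, sum_union]
    · congr 2
      · refine sum_congr rfl fun c hc => ?_
        obtain ⟨-, -, h⟩ := (mem_filter.1 hc).2
        rw [h, Nat.add_sub_cancel]
      · refine sum_congr rfl fun c hc => ?_
        obtain ⟨-, h, -⟩ := (mem_filter.1 hc).2
        rw [h, mul_comm (hubGapProd m c)]
        congr 3
        omega
    · rw [disjoint_left]
      intro c h1 h2
      have := (mem_filter.1 h1).2
      have := (mem_filter.1 h2).2
      omega
    · rw [disjoint_left]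
      intro c h1 h2
      simp only [mem_union, mem_filter, mem_univ, true_and] at h1 h2
      omega
  · intro j hj _
    rw [hN' j (by omega)]
    have : cycleIndepCount t j = 0 := by
      rw [cycleIndepCount, card_eq_zero, filter_eq_empty_iff]
      rintro S - ⟨hI, rfl⟩
      have := hI.two_mul_card_le
      by_cases he : Even (t + 1)
      · have := heven he; omega
      · have := hodd he; omega
    simp [this]
end
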